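/- Let q > 0 and let S̃_n(P) = −Σ_{k=1}^n p_k^{(q)} log₂ p_k denote the Aczél–Daróczy entropy. Then for all n, m > 1, P ∈ Δ_n and Q ∈ Δ_m, the direct product satisfies S̃_{nm}(P ⋆ Q) = S̃_n(P) + S̃_m(Q), where terms with zero probability are taken as 0. -/

import Mathlib

/-!
The escort map is multiplicative on direct products, `(P ⋆ Q)^{(q)} = P^{(q)} ⋆ Q^{(q)}`, because
`∑_{i,j} (p_i q_j)^q = (∑_i p_i^q) (∑_j q_j^q)`. Wherever the escort weight is nonzero both
probabilities are positive and `log₂ (p_i q_j) = log₂ p_i + log₂ q_j`, so the weighted sum splits in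
two, and in each half the weights of the other factor sum to `1`.
-/

open Real BigOperators

noncomputable section

/-- The `⊕_q`-addition: `u ⊕_q v = u + v + (1-q)·u·v`. -/
def opq (q u v : ℝ) : ℝ := u + v + (1 - q) * u * v

/-- `h(x) = x` for `q = 1`, and `h(x) = (2^{(1-q)x} - 1)/(1-q)` for `q ≠ 1`. -/
def hfun (q x : ℝ) : ℝ := if q = 1 then x else ((2:ℝ) ^ ((1 - q) * x) - 1) / (1 - q)

/-- `h⁻¹(x) = x` for `q = 1`, and `h⁻¹(x) = (1/(1-q))·log₂((1-q)x + 1)` for `q ≠ 1`. -/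
def hfunInv (q x : ℝ) : ℝ := if q = 1 then x else (1 / (1 - q)) * Real.logb 2 ((1 - q) * x + 1)

/-- A probability distribution: nonnegative components summing to 1. -/
def IsDistribution {α : Type*} [Fintype α] (p : α → ℝ) : Prop :=
  (∀ k, 0 ≤ p k) ∧ ∑ k, p k = 1

/-- The `q`-escort distribution: `p_k^{(q)} = p_k^q / ∑_i p_i^q` (real powers, `0^q = 0`). -/
def escort (q : ℝ) {α : Type*} [Fintype α] (p : α → ℝ) (k : α) : ℝ :=
  p k ^ q / ∑ i, p i ^ q

/-- The Aczél–Daróczy entropy `S̃(P) = −Σ_k p_k^{(q)} log₂ p_k`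
(terms with `p_k = 0` contribute `0`, as `log₂ 0 = 0` in Lean). -/
def AD (q : ℝ) {α : Type*} [Fintype α] (p : α → ℝ) : ℝ :=
  -∑ k, escort q p k * Real.logb 2 (p k)

theorem sum_rpow_pos {α : Type*} [Fintype α] (q : ℝ) {p : α → ℝ} (hp : IsDistribution p) :
    0 < ∑ k, p k ^ q := by
  obtain ⟨k, hk, hpk⟩ : ∃ k ∈ Finset.univ, 0 < p k :=
    Finset.exists_lt_of_sum_lt (f := fun _ => (0 : ℝ)) (by simp [hp.2])
  exact Finset.sum_pos' (fun i _ => Real.rpow_nonneg (hp.1 i) q)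
    ⟨k, hk, Real.rpow_pos_of_pos hpk q⟩

theorem sum_escort {α : Type*} [Fintype α] (q : ℝ) {p : α → ℝ} (hp : IsDistribution p) :
    ∑ k, escort q p k = 1 := by
  simp only [escort]
  rw [← Finset.sum_div, div_self (sum_rpow_pos q hp).ne']

theorem escort_prod {α β : Type*} [Fintype α] [Fintype β] (q : ℝ) {p : α → ℝ} {r : β → ℝ}
    (hp : ∀ k, 0 ≤ p k) (hr : ∀ k, 0 ≤ r k) (x : α × β) :
    escort q (fun x : α × β => p x.1 * r x.2) x = escort q p x.1 * escort q r x.2 := by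
  simp only [escort, Real.mul_rpow (hp _) (hr _)]
  rw [Fintype.sum_prod_type, ← Fintype.sum_mul_sum (fun i => p i ^ q) (fun j => r j ^ q), mul_div_mul_comm]

/-- The escort weight vanishes with the probability, which is where `0 < q` is needed. -/
theorem escort_eq_zero {α : Type*} [Fintype α] {q : ℝ} (hq : 0 < q) {p : α → ℝ} {k : α}
    (hk : p k = 0) : escort q p k = 0 := by
  simp [escort, hk, Real.zero_rpow hq.ne']

/-- for `q > 0`, the Aczél–Daróczy entropy is additive on direct
products: `S̃_{nm}(P ⋆ Q) = S̃_n(P) + S̃_m(Q)` for all `P ∈ Δ_n`, `Q ∈ Δ_m`. -/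
theorem stmt11 (q : ℝ) (hq0 : 0 < q) (n m : ℕ) (hn : 1 < n) (hm : 1 < m)
    (p : Fin n → ℝ) (qd : Fin m → ℝ)
    (hp : IsDistribution p) (hqd : IsDistribution qd) :
    AD q (fun x : Fin n × Fin m => p x.1 * qd x.2) = AD q p + AD q qd := by
  have key : ∀ i j, escort q (fun x : Fin n × Fin m => p x.1 * qd x.2) (i, j)
        * Real.logb 2 (p i * qd j)
      = escort q p i * Real.logb 2 (p i) * escort q qd j
        + escort q p i * (escort q qd j * Real.logb 2 (qd j)) := by
    intro i j
    rw [escort_prod q hp.1 hqd.1]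
    by_cases hi : p i = 0
    · simp [escort_eq_zero hq0 hi]
    by_cases hj : qd j = 0
    · simp [escort_eq_zero hq0 hj]
    rw [Real.logb_mul hi hj]
    ring
  simp only [AD, Fintype.sum_prod_type, key, Finset.sum_add_distrib]
  rw [← Finset.sum_mul_sum, ← Finset.sum_mul_sum, sum_escort q hp, sum_escort q hqd]
  ring
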